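/- Let n ≥ 4 with n ∉ {1,3,5}, and let k be a field of characteristic e > 0 such that e does not divide n!. Then the Brauer algebra Br(D_n, k, 0) with parameter δ = 0 is not a semisimple ring. -/

import Mathlib

open FreeAlgebra

/-- The path graph (Coxeter diagram of type `A_n`) on nodes `1, …, n`
(realized as `Fin n`, node `i` corresponding to index `i-1`): node `i` is
adjacent to node `i+1` for `1 ≤ i ≤ n-1`. -/
def typeA (n : ℕ) : SimpleGraph (Fin n) :=
  SimpleGraph.fromRel (fun i j => (i : ℕ) + 1 = (j : ℕ))

/-- The Coxeter diagram of type `D_n` (`n ≥ 4`) on nodes `1, …, n` (realized as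
`Fin n`, node `i` corresponding to index `i-1`): nodes `1` and `2` are both
adjacent to node `3`, and nodes `i`, `i+1` are adjacent for `3 ≤ i ≤ n-1`. -/
def typeD (n : ℕ) : SimpleGraph (Fin n) :=
  SimpleGraph.fromRel (fun i j =>
    ((i : ℕ) = 0 ∧ (j : ℕ) = 2) ∨ ((i : ℕ) = 1 ∧ (j : ℕ) = 2) ∨
      (2 ≤ (i : ℕ) ∧ (i : ℕ) + 1 = (j : ℕ)))

/-- The Coxeter diagram of type `E_n` (`n = 6, 7, 8`) on nodes `1, …, n`
(realized as `Fin n`, node `i` corresponding to index `i-1`): a path on nodes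
`1, 3, 4, …, n` together with node `2` attached to node `4`. -/
def typeE (n : ℕ) : SimpleGraph (Fin n) :=
  SimpleGraph.fromRel (fun i j =>
    ((i : ℕ) = 0 ∧ (j : ℕ) = 2) ∨ ((i : ℕ) = 1 ∧ (j : ℕ) = 3) ∨
      (2 ≤ (i : ℕ) ∧ (i : ℕ) + 1 = (j : ℕ)))
/-- The defining relations of the Brauer algebra `Br(Q, R, δ)` of simply-laced
type given by the graph `Q`, imposed on the free `R`-algebra on the generators
`R_1, …, R_n` (encoded as `Sum.inl i`) and `E_1, …, E_n` (encoded as `Sum.inr i`). -/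
inductive BrauerRel (n : ℕ) (Q : SimpleGraph (Fin n)) (R : Type*) [CommRing R] (δ : R) :
    FreeAlgebra R (Fin n ⊕ Fin n) → FreeAlgebra R (Fin n ⊕ Fin n) → Prop
  /-- `R_i² = 1` -/
  | rsq (i : Fin n) : BrauerRel n Q R δ (ι R (.inl i) * ι R (.inl i)) 1
  /-- `R_i E_i = E_i` -/
  | re (i : Fin n) : BrauerRel n Q R δ (ι R (.inl i) * ι R (.inr i)) (ι R (.inr i))
  /-- `E_i R_i = E_i` -/
  | er (i : Fin n) : BrauerRel n Q R δ (ι R (.inr i) * ι R (.inl i)) (ι R (.inr i))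
  /-- `E_i² = δ·E_i` -/
  | esq (i : Fin n) : BrauerRel n Q R δ (ι R (.inr i) * ι R (.inr i)) (δ • ι R (.inr i))
  /-- `R_i R_j = R_j R_i` whenever `i ≁ j` -/
  | rr (i j : Fin n) (hne : i ≠ j) (hadj : ¬ Q.Adj i j) :
      BrauerRel n Q R δ (ι R (.inl i) * ι R (.inl j)) (ι R (.inl j) * ι R (.inl i))
  /-- `E_i R_j = R_j E_i` whenever `i ≁ j` -/
  | erc (i j : Fin n) (hne : i ≠ j) (hadj : ¬ Q.Adj i j) :
      BrauerRel n Q R δ (ι R (.inr i) * ι R (.inl j)) (ι R (.inl j) * ι R (.inr i))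
  /-- `E_i E_j = E_j E_i` whenever `i ≁ j` -/
  | ee (i j : Fin n) (hne : i ≠ j) (hadj : ¬ Q.Adj i j) :
      BrauerRel n Q R δ (ι R (.inr i) * ι R (.inr j)) (ι R (.inr j) * ι R (.inr i))
  /-- `R_i R_j R_i = R_j R_i R_j` whenever `i ∼ j` -/
  | braid (i j : Fin n) (hadj : Q.Adj i j) :
      BrauerRel n Q R δ (ι R (.inl i) * ι R (.inl j) * ι R (.inl i))
        (ι R (.inl j) * ι R (.inl i) * ι R (.inl j))
  /-- `R_j R_i E_j = E_i E_j` whenever `i ∼ j` -/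
  | rre (i j : Fin n) (hadj : Q.Adj i j) :
      BrauerRel n Q R δ (ι R (.inl j) * ι R (.inl i) * ι R (.inr j))
        (ι R (.inr i) * ι R (.inr j))
  /-- `R_i E_j R_i = R_j E_i R_j` whenever `i ∼ j` -/
  | rer (i j : Fin n) (hadj : Q.Adj i j) :
      BrauerRel n Q R δ (ι R (.inl i) * ι R (.inr j) * ι R (.inl i))
        (ι R (.inl j) * ι R (.inr i) * ι R (.inl j))

/-- The Brauer algebra `Br(Q, R, δ)` of simply-laced type `Q` over the
commutative ring `R` with parameter `δ ∈ R`. -/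
abbrev BrauerAlgebra (n : ℕ) (Q : SimpleGraph (Fin n)) (R : Type*) [CommRing R] (δ : R) :=
  RingQuot (BrauerRel n Q R δ)

/-!
Call two nodes of `Q` twins if they have the same neighbours; the nodes `1` and `2` of `D_n` are
twins. For every graph `Q` the algebra `Br(Q, k, 0)` acts on the free module on the sets `S` of
nodes: `R_l` toggles the neighbours of `l` if `l ∈ S` and fixes `S` otherwise, while `E_l` sends `S`
to the neighbourhood `N(l)` if `l ∈ S` and to `0` otherwise. (Reading `S` as the functional
`x ↦ (x, ·)` on the simple roots modulo 2, `R_l` is the reflection in the root `α_l`, `N(l)` is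
`α_l` itself, and `l ∈ S` says that `(x, α_l)` is odd.)

If `i ≠ j` are twins, the sets that do not separate `i` from `j` span a subrepresentation killed by
`f = E_i - E_j`, and `f` sends `{i}` to `N(i)`, which lies in it. Thus `f x f` kills `{i}` for all
`x`, although `f` does not, whereas in a semisimple ring `f = f x f` for some `x`.
-/

lemma exists_mul_mul_eq_self_of_isSemisimpleRing {A : Type*} [Ring A] [IsSemisimpleRing A]
    (a : A) : ∃ x, a * x * a = a := by
  obtain ⟨e, he, hspan⟩ := IsSemisimpleRing.ideal_eq_span_idempotent (Ideal.span {a})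
  obtain ⟨x, hx⟩ : ∃ x, x * a = e :=
    Ideal.mem_span_singleton'.mp (hspan ▸ Ideal.mem_span_singleton_self e)
  obtain ⟨y, hy⟩ : ∃ y, y * e = a :=
    Ideal.mem_span_singleton'.mp (hspan ▸ Ideal.mem_span_singleton_self a)
  refine ⟨x, ?_⟩
  rw [mul_assoc, hx, ← hy, mul_assoc, he.eq]

section LitToggle

variable {V : Type*} (Q : SimpleGraph V) {l m v : V} {S : Set V}

/-- The move at the vertex `l` of the lit-only σ-game on `Q`: if `l` belongs to the set `S` of lit
vertices, the neighbours of `l` are toggled, and otherwise nothing happens. -/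
def litToggle (l : V) (S : Set V) : Set V :=
  symmDiff S {v ∈ Q.neighborSet l | l ∈ S}

variable {Q}

lemma mem_litToggle : v ∈ litToggle Q l S ↔ (v ∈ S ↔ ¬ (Q.Adj l v ∧ l ∈ S)) := by
  simp only [litToggle, Set.mem_symmDiff, Set.mem_ofPred_eq, SimpleGraph.mem_neighborSet]
  tauto

lemma mem_litToggle_of_not_adj (h : ¬ Q.Adj l m) : m ∈ litToggle Q l S ↔ m ∈ S := by
  simp [mem_litToggle, h]

lemma mem_litToggle_comm (h : Q.Adj l m) : m ∈ litToggle Q l S ↔ l ∈ litToggle Q m S := by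
  simp only [mem_litToggle, h, h.symm, true_and]
  tauto

lemma litToggle_litToggle : litToggle Q l (litToggle Q l S) = S := by
  ext v
  simp only [mem_litToggle, SimpleGraph.irrefl]
  tauto

lemma litToggle_comm (h : ¬ Q.Adj l m) :
    litToggle Q l (litToggle Q m S) = litToggle Q m (litToggle Q l S) := by
  have h' : ¬ Q.Adj m l := fun hml => h hml.symm
  ext v
  simp only [mem_litToggle, h, h']
  tauto

lemma litToggle_braid (h : Q.Adj l m) :
    litToggle Q l (litToggle Q m (litToggle Q l S)) =
      litToggle Q m (litToggle Q l (litToggle Q m S)) := by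
  ext v
  simp only [mem_litToggle, SimpleGraph.irrefl, h, h.symm]
  grind

lemma litToggle_neighborSet_of_not_adj (h : ¬ Q.Adj l m) :
    litToggle Q m (Q.neighborSet l) = Q.neighborSet l := by
  ext v
  simp [mem_litToggle, h]

lemma litToggle_neighborSet_comm (h : Q.Adj l m) :
    litToggle Q l (Q.neighborSet m) = litToggle Q m (Q.neighborSet l) := by
  ext v
  simp only [mem_litToggle, SimpleGraph.mem_neighborSet, h, h.symm]
  tauto

lemma mem_neighborSet_iff_of_neighborSet_eq {i j : V} (hij : Q.neighborSet i = Q.neighborSet j) :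
    i ∈ Q.neighborSet l ↔ j ∈ Q.neighborSet l := by
  simpa only [SimpleGraph.mem_neighborSet, Q.adj_comm] using Set.ext_iff.mp hij l

lemma mem_litToggle_iff_of_neighborSet_eq {i j : V} (hij : Q.neighborSet i = Q.neighborSet j)
    (hS : i ∈ S ↔ j ∈ S) : i ∈ litToggle Q l S ↔ j ∈ litToggle Q l S := by
  have hl : Q.Adj l i ↔ Q.Adj l j := mem_neighborSet_iff_of_neighborSet_eq hij
  simp only [mem_litToggle, hS, hl]

end LitToggle

section LitOperators

variable {V : Type*} (Q : SimpleGraph V) (k : Type*) [CommRing k] {l m : V} {S : Set V} {c : k}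

/-- The operator by which the generator `R_l` acts on the free module on the subsets of `V`. -/
noncomputable def litReflection (l : V) : Module.End k (Set V →₀ k) :=
  Finsupp.lmapDomain k k (litToggle Q l)

/-- The operator by which the generator `E_l` acts on the free module on the subsets of `V`: it
sends the sets containing `l` to the neighbourhood of `l` and the other sets to `0`. -/
noncomputable def litContraction (l : V) : Module.End k (Set V →₀ k) :=
  Finsupp.linearCombination k ({S | l ∈ S}.indicator fun _ => Finsupp.single (Q.neighborSet l) 1)

variable {Q k}

lemma litReflection_single :
    litReflection Q k l (Finsupp.single S c) = Finsupp.single (litToggle Q l S) c :=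
  Finsupp.mapDomain_single

lemma litContraction_single_of_mem (h : l ∈ S) :
    litContraction Q k l (Finsupp.single S c) = Finsupp.single (Q.neighborSet l) c := by
  simp [litContraction, h]

lemma litContraction_single_of_notMem (h : l ∉ S) :
    litContraction Q k l (Finsupp.single S c) = 0 := by
  simp [litContraction, h]

lemma litReflection_mul_self : litReflection Q k l * litReflection Q k l = 1 := by
  refine Finsupp.lhom_ext fun S c => ?_
  simp only [Module.End.mul_apply, Module.End.one_apply, litReflection_single, litToggle_litToggle]

lemma litReflection_comm (h : ¬ Q.Adj l m) :
    litReflection Q k l * litReflection Q k m = litReflection Q k m * litReflection Q k l := by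
  refine Finsupp.lhom_ext fun S c => ?_
  simp only [Module.End.mul_apply, litReflection_single, litToggle_comm h]

lemma litReflection_braid (h : Q.Adj l m) :
    litReflection Q k l * litReflection Q k m * litReflection Q k l =
      litReflection Q k m * litReflection Q k l * litReflection Q k m := by
  refine Finsupp.lhom_ext fun S c => ?_
  simp only [Module.End.mul_apply, litReflection_single, litToggle_braid h]

lemma litReflection_mul_litContraction_of_not_adj (h : ¬ Q.Adj l m) :
    litReflection Q k m * litContraction Q k l = litContraction Q k l := by
  refine Finsupp.lhom_ext fun S c => ?_
  rw [Module.End.mul_apply]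
  by_cases hS : l ∈ S
  · rw [litContraction_single_of_mem hS, litReflection_single, litToggle_neighborSet_of_not_adj h]
  · rw [litContraction_single_of_notMem hS, map_zero]

lemma litContraction_mul_litReflection_of_not_adj (h : ¬ Q.Adj l m) :
    litContraction Q k l * litReflection Q k m = litContraction Q k l := by
  refine Finsupp.lhom_ext fun S c => ?_
  have hl : l ∈ litToggle Q m S ↔ l ∈ S := mem_litToggle_of_not_adj fun hml => h hml.symm
  rw [Module.End.mul_apply, litReflection_single]
  by_cases hS : l ∈ S
  · rw [litContraction_single_of_mem hS, litContraction_single_of_mem (hl.mpr hS)]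
  · rw [litContraction_single_of_notMem hS, litContraction_single_of_notMem (mt hl.mp hS)]

lemma litContraction_mul_litContraction_of_not_adj (h : ¬ Q.Adj l m) :
    litContraction Q k m * litContraction Q k l = 0 := by
  refine Finsupp.lhom_ext fun S c => ?_
  rw [Module.End.mul_apply, LinearMap.zero_apply]
  by_cases hS : l ∈ S
  · rw [litContraction_single_of_mem hS,
      litContraction_single_of_notMem (S := Q.neighborSet l) h]
  · rw [litContraction_single_of_notMem hS, map_zero]

lemma litReflection_mul_litReflection_mul_litContraction (h : Q.Adj l m) :
    litReflection Q k m * litReflection Q k l * litContraction Q k m =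
      litContraction Q k l * litContraction Q k m := by
  refine Finsupp.lhom_ext fun S c => ?_
  simp only [Module.End.mul_apply]
  by_cases hS : m ∈ S
  · rw [litContraction_single_of_mem hS, litReflection_single, litReflection_single,
      litToggle_neighborSet_comm h, litToggle_litToggle,
      litContraction_single_of_mem (S := Q.neighborSet m) h.symm]
  · simp only [litContraction_single_of_notMem hS, map_zero]

lemma litReflection_mul_litContraction_mul_litReflection (h : Q.Adj l m) :
    litReflection Q k l * litContraction Q k m * litReflection Q k l =
      litReflection Q k m * litContraction Q k l * litReflection Q k m := by
  refine Finsupp.lhom_ext fun S c => ?_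
  simp only [Module.End.mul_apply, litReflection_single]
  have hlm : m ∈ litToggle Q l S ↔ l ∈ litToggle Q m S := mem_litToggle_comm h
  by_cases hS : m ∈ litToggle Q l S
  · rw [litContraction_single_of_mem hS, litContraction_single_of_mem (hlm.mp hS),
      litReflection_single, litReflection_single, litToggle_neighborSet_comm h]
  · rw [litContraction_single_of_notMem hS, litContraction_single_of_notMem (mt hlm.mpr hS),
      map_zero, map_zero]

end LitOperators

section LitRepresentation

variable {n : ℕ} (Q : SimpleGraph (Fin n)) (k : Type*) [CommRing k]

/-- The action of the free algebra on the symbols `R_l`, `E_l` by the moves of the lit-only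
σ-game. -/
noncomputable def freeLitRepresentation :
    FreeAlgebra k (Fin n ⊕ Fin n) →ₐ[k] Module.End k (Set (Fin n) →₀ k) :=
  FreeAlgebra.lift k (Sum.elim (litReflection Q k) (litContraction Q k))

variable {Q k}

lemma freeLitRepresentation_ι (x : Fin n ⊕ Fin n) :
    freeLitRepresentation Q k (ι k x) = Sum.elim (litReflection Q k) (litContraction Q k) x :=
  FreeAlgebra.lift_ι_apply _ _

lemma freeLitRepresentation_eq_of_brauerRel ⦃a b : FreeAlgebra k (Fin n ⊕ Fin n)⦄
    (h : BrauerRel n Q k 0 a b) :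
    freeLitRepresentation Q k a = freeLitRepresentation Q k b := by
  cases h <;> simp only [map_mul, map_one, zero_smul, map_zero, freeLitRepresentation_ι,
    Sum.elim_inl, Sum.elim_inr]
  case rsq => exact litReflection_mul_self
  case re => exact litReflection_mul_litContraction_of_not_adj Q.irrefl
  case er => exact litContraction_mul_litReflection_of_not_adj Q.irrefl
  case esq => exact litContraction_mul_litContraction_of_not_adj Q.irrefl
  case rr i j _ hadj => exact litReflection_comm hadj
  case erc i j _ hadj =>
    rw [litContraction_mul_litReflection_of_not_adj hadj,
      litReflection_mul_litContraction_of_not_adj hadj]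
  case ee i j _ hadj =>
    rw [litContraction_mul_litContraction_of_not_adj hadj,
      litContraction_mul_litContraction_of_not_adj fun hji => hadj hji.symm]
  case braid i j hadj => exact litReflection_braid hadj
  case rre i j hadj => exact litReflection_mul_litReflection_mul_litContraction hadj
  case rer i j hadj => exact litReflection_mul_litContraction_mul_litReflection hadj

variable (Q k) in
/-- The representation of `Br(Q, k, 0)` on the free module on the sets of nodes of `Q` by the moves
of the lit-only σ-game. -/
noncomputable def litRepresentation :
    BrauerAlgebra n Q k 0 →ₐ[k] Module.End k (Set (Fin n) →₀ k) :=
  RingQuot.liftAlgHom k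
    ⟨freeLitRepresentation Q k, freeLitRepresentation_eq_of_brauerRel⟩

lemma litRepresentation_mkAlgHom (a : FreeAlgebra k (Fin n ⊕ Fin n)) :
    litRepresentation Q k (RingQuot.mkAlgHom k _ a) = freeLitRepresentation Q k a :=
  RingQuot.liftAlgHom_mkAlgHom_apply ..

end LitRepresentation

section Twins

variable {V : Type*} {Q : SimpleGraph V} (k : Type*) [CommRing k] {i j : V}

variable (i j) in
/-- The span of the sets that do not separate `i` from `j`. It is a subrepresentation when `i` and
`j` are twins in `Q`, and there `E_i` and `E_j` agree. -/
noncomputable def nonseparatingSubmodule : Submodule k (Set V →₀ k) :=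
  Submodule.span k ((fun S => Finsupp.single S 1) '' {S | i ∈ S ↔ j ∈ S})

variable {k}

lemma single_mem_nonseparatingSubmodule {S : Set V} (hS : i ∈ S ↔ j ∈ S) :
    Finsupp.single S 1 ∈ nonseparatingSubmodule k i j :=
  Submodule.subset_span ⟨S, hS, rfl⟩

lemma nonseparatingSubmodule_le_comap_litReflection
    (hij : Q.neighborSet i = Q.neighborSet j) (l : V) :
    nonseparatingSubmodule k i j ≤ (nonseparatingSubmodule k i j).comap (litReflection Q k l) := by
  refine Submodule.span_le.mpr ?_
  rintro _ ⟨S, hS, rfl⟩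
  rw [SetLike.mem_coe, Submodule.mem_comap, litReflection_single]
  exact single_mem_nonseparatingSubmodule (mem_litToggle_iff_of_neighborSet_eq hij hS)

lemma nonseparatingSubmodule_le_comap_litContraction
    (hij : Q.neighborSet i = Q.neighborSet j) (l : V) :
    nonseparatingSubmodule k i j ≤
      (nonseparatingSubmodule k i j).comap (litContraction Q k l) := by
  refine Submodule.span_le.mpr ?_
  rintro _ ⟨S, -, rfl⟩
  rw [SetLike.mem_coe, Submodule.mem_comap]
  by_cases hl : l ∈ S
  · rw [litContraction_single_of_mem hl]
    exact single_mem_nonseparatingSubmodule (mem_neighborSet_iff_of_neighborSet_eq hij)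
  · rw [litContraction_single_of_notMem hl]
    exact zero_mem _

lemma nonseparatingSubmodule_le_ker_litContraction_sub
    (hij : Q.neighborSet i = Q.neighborSet j) :
    nonseparatingSubmodule k i j ≤ LinearMap.ker (litContraction Q k i - litContraction Q k j) := by
  refine Submodule.span_le.mpr ?_
  rintro _ ⟨S, hS, rfl⟩
  rw [SetLike.mem_coe, LinearMap.mem_ker, LinearMap.sub_apply, sub_eq_zero]
  by_cases hi : i ∈ S
  · rw [litContraction_single_of_mem hi, litContraction_single_of_mem (hS.mp hi), hij]
  · rw [litContraction_single_of_notMem hi, litContraction_single_of_notMem (mt hS.mpr hi)]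

lemma litContraction_sub_single_singleton (hne : i ≠ j) :
    (litContraction Q k i - litContraction Q k j) (Finsupp.single {i} 1) =
      Finsupp.single (Q.neighborSet i) 1 := by
  rw [LinearMap.sub_apply, litContraction_single_of_mem (Set.mem_singleton i),
    litContraction_single_of_notMem (by simpa using hne.symm), sub_zero]

end Twins

section BrauerAlgebra

variable {n : ℕ} {Q : SimpleGraph (Fin n)} {k : Type*} [CommRing k] {i j : Fin n}

lemma nonseparatingSubmodule_le_comap_freeLitRepresentation
    (hij : Q.neighborSet i = Q.neighborSet j) (a : FreeAlgebra k (Fin n ⊕ Fin n)) :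
    nonseparatingSubmodule k i j ≤
      (nonseparatingSubmodule k i j).comap (freeLitRepresentation Q k a) := by
  induction a using FreeAlgebra.induction with
  | grade0 c =>
    intro x hx
    rw [AlgHom.commutes]
    exact Submodule.smul_mem _ c hx
  | grade1 g =>
    rw [freeLitRepresentation_ι]
    cases g with
    | inl l => exact nonseparatingSubmodule_le_comap_litReflection hij l
    | inr l => exact nonseparatingSubmodule_le_comap_litContraction hij l
  | mul a b ha hb =>
    rw [map_mul]
    exact fun x hx => ha (hb hx)
  | add a b ha hb =>
    rw [map_add]
    exact fun x hx => Submodule.add_mem (nonseparatingSubmodule k i j) (ha hx) (hb hx)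

lemma nonseparatingSubmodule_le_comap_litRepresentation
    (hij : Q.neighborSet i = Q.neighborSet j) (a : BrauerAlgebra n Q k 0) :
    nonseparatingSubmodule k i j ≤
      (nonseparatingSubmodule k i j).comap (litRepresentation Q k a) := by
  obtain ⟨a, rfl⟩ := RingQuot.mkAlgHom_surjective k (BrauerRel n Q k 0) a
  rw [litRepresentation_mkAlgHom]
  exact nonseparatingSubmodule_le_comap_freeLitRepresentation hij a

end BrauerAlgebra

lemma typeD_neighborSet_zero_eq_one {n : ℕ} (hn : 1 < n) :
    (typeD n).neighborSet ⟨0, by lia⟩ = (typeD n).neighborSet ⟨1, hn⟩ := by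
  ext v
  simp only [typeD, SimpleGraph.mem_neighborSet, SimpleGraph.fromRel_adj, ne_eq, Fin.ext_iff]
  grind

theorem brauerAlgebra_typeD_posChar_deltaZero_not_isSemisimpleRing_general
    {n : ℕ} {Q : SimpleGraph (Fin n)} {k : Type*} [CommRing k] [Nontrivial k] {i j : Fin n}
    (hne : i ≠ j) (hij : Q.neighborSet i = Q.neighborSet j) :
    ¬ IsSemisimpleRing (BrauerAlgebra n Q k 0) := by
  intro hss
  let f : BrauerAlgebra n Q k 0 := RingQuot.mkAlgHom k _ (ι k (.inr i) - ι k (.inr j))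
  have hf : litRepresentation Q k f = litContraction Q k i - litContraction Q k j := by
    simp only [f, litRepresentation_mkAlgHom, map_sub, freeLitRepresentation_ι, Sum.elim_inr]
  obtain ⟨x, hx⟩ := exists_mul_mul_eq_self_of_isSemisimpleRing f
  have hN : Finsupp.single (Q.neighborSet i) (1 : k) ∈ nonseparatingSubmodule k i j :=
    single_mem_nonseparatingSubmodule (mem_neighborSet_iff_of_neighborSet_eq hij)
  have hzero : Finsupp.single (Q.neighborSet i) (1 : k) = 0 := calc
    _ = litRepresentation Q k f (Finsupp.single {i} 1) := by
      rw [hf, litContraction_sub_single_singleton hne]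
    _ = litRepresentation Q k (f * x * f) (Finsupp.single {i} 1) := by rw [hx]
    _ = (litContraction Q k i - litContraction Q k j)
          (litRepresentation Q k x (Finsupp.single (Q.neighborSet i) 1)) := by
      rw [map_mul, map_mul, hf, Module.End.mul_apply, Module.End.mul_apply,
        litContraction_sub_single_singleton hne]
    _ = 0 := nonseparatingSubmodule_le_ker_litContraction_sub hij
      (nonseparatingSubmodule_le_comap_litRepresentation hij x hN)
  exact one_ne_zero (Finsupp.single_eq_zero.mp hzero)

/-- Let `n ≥ 4` with `n ∉ {1,3,5}` and let `k` be a field of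
characteristic `e > 0` with `e ∤ n!`. Then the Brauer algebra `Br(D_n, k, 0)`
with parameter `δ = 0` is not a semisimple ring. -/
theorem brauerAlgebra_typeD_posChar_deltaZero_not_isSemisimpleRing
    (n : ℕ) (hn : 4 ≤ n) (hn' : n ∉ ({1, 3, 5} : Set ℕ))
    (k : Type) [Field k] (e : ℕ)
    (he : ringChar k = e) (hepos : 0 < e) (hediv : ¬ e ∣ Nat.factorial n) :
    ¬ IsSemisimpleRing (BrauerAlgebra n (typeD n) k 0) := by
  have hn1 : 1 < n := by lia
  exact brauerAlgebra_typeD_posChar_deltaZero_not_isSemisimpleRing_general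
    (Fin.ne_of_val_ne Nat.zero_ne_one) (typeD_neighborSet_zero_eq_one hn1)
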